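/- arXiv:math-ph/0305046 — 4 statements merged into one kernel-verified Lean document; each statement's English description precedes it below -/
import Mathlib

section
/- Let Ω ⊆ ℝ³ be open, let ν : Ω → ℂ be continuous, and let β be a constant purely vectorial biquaternion with β² ≠ 0, and let λ ∈ ℂ∖{0} satisfy λ²·1 = β² (as biquaternions). Define S^± f := (1/(2λ))·f·(λ ± β). Then a differentiable function f : Ω → ℍ(ℂ) satisfies Df + νf + fβ = 0 on Ω if and only if f⁺ := S⁺f satisfies Df⁺ + (ν+λ)f⁺ = 0 on Ω and f⁻ := S⁻f satisfies Df⁻ + (ν−λ)f⁻ = 0 on Ω; moreover f = f⁺ + f⁻. -/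
noncomputable section

abbrev HC := Quaternion ℂ

def e1 : HC := ⟨0, 1, 0, 0⟩
def e2 : HC := ⟨0, 0, 1, 0⟩
def e3 : HC := ⟨0, 0, 0, 1⟩

def pd (k : Fin 3) (g : (Fin 3 → ℝ) → ℂ) (x : Fin 3 → ℝ) : ℂ :=
  fderiv ℝ g x (Pi.single k 1)

def lap (g : (Fin 3 → ℝ) → ℂ) (x : Fin 3 → ℝ) : ℂ :=
  pd 0 (pd 0 g) x + pd 1 (pd 1 g) x + pd 2 (pd 2 g) x

def pdq (k : Fin 3) (f : (Fin 3 → ℝ) → HC) (x : Fin 3 → ℝ) : HC :=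
  ⟨pd k (fun y => (f y).re) x, pd k (fun y => (f y).imI) x,
   pd k (fun y => (f y).imJ) x, pd k (fun y => (f y).imK) x⟩

def Dq (f : (Fin 3 → ℝ) → HC) (x : Fin 3 → ℝ) : HC :=
  e1 * pdq 0 f x + e2 * pdq 1 f x + e3 * pdq 2 f x

def lapq (f : (Fin 3 → ℝ) → HC) (x : Fin 3 → ℝ) : HC :=
  ⟨lap (fun y => (f y).re) x, lap (fun y => (f y).imI) x,
   lap (fun y => (f y).imJ) x, lap (fun y => (f y).imK) x⟩

def QDiffOn (f : (Fin 3 → ℝ) → HC) (Ω : Set (Fin 3 → ℝ)) : Prop :=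
  DifferentiableOn ℝ (fun y => (f y).re) Ω ∧ DifferentiableOn ℝ (fun y => (f y).imI) Ω ∧
  DifferentiableOn ℝ (fun y => (f y).imJ) Ω ∧ DifferentiableOn ℝ (fun y => (f y).imK) Ω

def QC2On (f : (Fin 3 → ℝ) → HC) (Ω : Set (Fin 3 → ℝ)) : Prop :=
  ContDiffOn ℝ 2 (fun y => (f y).re) Ω ∧ ContDiffOn ℝ 2 (fun y => (f y).imI) Ω ∧
  ContDiffOn ℝ 2 (fun y => (f y).imJ) Ω ∧ ContDiffOn ℝ 2 (fun y => (f y).imK) Ω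


/-- Right multiplication projections `S^± f = (1/(2λ)) f (λ ± β)`. -/
def Sp (lam : ℂ) (β : HC) (f : (Fin 3 → ℝ) → HC) : (Fin 3 → ℝ) → HC :=
  fun x => ((2 * lam)⁻¹ : ℂ) • (f x * ((lam : HC) + β))

def Sm (lam : ℂ) (β : HC) (f : (Fin 3 → ℝ) → HC) : (Fin 3 → ℝ) → HC :=
  fun x => ((2 * lam)⁻¹ : ℂ) • (f x * ((lam : HC) - β))

lemma pd_lin (k : Fin 3) (g0 g1 g2 g3 : (Fin 3 → ℝ) → ℂ) (x : Fin 3 → ℝ)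
    (h0 : DifferentiableAt ℝ g0 x) (h1 : DifferentiableAt ℝ g1 x)
    (h2 : DifferentiableAt ℝ g2 x) (h3 : DifferentiableAt ℝ g3 x) (a0 a1 a2 a3 : ℂ) :
    pd k (fun y => a0 * g0 y + a1 * g1 y + a2 * g2 y + a3 * g3 y) x =
      a0 * pd k g0 x + a1 * pd k g1 x + a2 * pd k g2 x + a3 * pd k g3 x := by
  have h := (((h0.hasFDerivAt.const_mul a0).add (h1.hasFDerivAt.const_mul a1)).add
    (h2.hasFDerivAt.const_mul a2)).add (h3.hasFDerivAt.const_mul a3)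
  unfold pd
  have h' : fderiv ℝ (fun y => a0 * g0 y + a1 * g1 y + a2 * g2 y + a3 * g3 y) x = _ := h.fderiv
  rw [h']
  simp

lemma pdq_mul (k : Fin 3) (f : (Fin 3 → ℝ) → HC) (x : Fin 3 → ℝ)
    (h0 : DifferentiableAt ℝ (fun y => (f y).re) x) (h1 : DifferentiableAt ℝ (fun y => (f y).imI) x)
    (h2 : DifferentiableAt ℝ (fun y => (f y).imJ) x)
    (h3 : DifferentiableAt ℝ (fun y => (f y).imK) x) (c : ℂ) (q : HC) :
    pdq k (fun y => c • (f y * q)) x = c • (pdq k f x * q) := by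
  have key := pd_lin k _ _ _ _ x h0 h1 h2 h3
  ext
  · have := key (c * q.re) (-c * q.imI) (-c * q.imJ) (-c * q.imK)
    change pd k (fun y => (c • (f y * q)).re) x = (c • (pdq k f x * q)).re
    simp only [Quaternion.re_smul, Quaternion.re_mul, smul_eq_mul]
    refine Eq.trans (congrArg (fun g => pd k g x) ?_) (this.trans ?_)
    · funext y; ring
    · simp only [pdq]; ring
  · have := key (c * q.imI) (c * q.re) (c * q.imK) (-c * q.imJ)
    change pd k (fun y => (c • (f y * q)).imI) x = (c • (pdq k f x * q)).imI
    simp only [Quaternion.imI_smul, Quaternion.imI_mul, smul_eq_mul]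
    refine Eq.trans (congrArg (fun g => pd k g x) ?_) (this.trans ?_)
    · funext y; ring
    · simp only [pdq]; ring
  · have := key (c * q.imJ) (-c * q.imK) (c * q.re) (c * q.imI)
    change pd k (fun y => (c • (f y * q)).imJ) x = (c • (pdq k f x * q)).imJ
    simp only [Quaternion.imJ_smul, Quaternion.imJ_mul, smul_eq_mul]
    refine Eq.trans (congrArg (fun g => pd k g x) ?_) (this.trans ?_)
    · funext y; ring
    · simp only [pdq]; ring
  · have := key (c * q.imK) (c * q.imJ) (-c * q.imI) (c * q.re)
    change pd k (fun y => (c • (f y * q)).imK) x = (c • (pdq k f x * q)).imK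
    simp only [Quaternion.imK_smul, Quaternion.imK_mul, smul_eq_mul]
    refine Eq.trans (congrArg (fun g => pd k g x) ?_) (this.trans ?_)
    · funext y; ring
    · simp only [pdq]; ring

lemma Dq_mul (Ω : Set (Fin 3 → ℝ)) (hΩ : IsOpen Ω) (f : (Fin 3 → ℝ) → HC) (hf : QDiffOn f Ω)
    (x : Fin 3 → ℝ) (hx : x ∈ Ω) (c : ℂ) (q : HC) :
    Dq (fun y => c • (f y * q)) x = c • (Dq f x * q) := by
  have hn := hΩ.mem_nhds hx
  obtain ⟨h0, h1, h2, h3⟩ := hf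
  unfold Dq
  have key := fun k => pdq_mul k f x (h0.differentiableAt hn) (h1.differentiableAt hn)
    (h2.differentiableAt hn) (h3.differentiableAt hn) c q
  rw [key, key, key]
  have hc : ∀ z : HC, z * (c : HC) = (c : HC) * z := fun z => (Quaternion.coe_commutes c z).symm
  simp only [← Quaternion.coe_mul_eq_smul, mul_add, add_mul, ← mul_assoc, hc]

lemma alg_key (E F β q : HC) (n l c : ℂ) (hq : β * q = (l : HC) * q) :
    c • (E * q) + ((n + l : ℂ) : HC) * (c • (F * q)) =
      c • ((E + (n : HC) * F + F * β) * q) := by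
  have hc : ∀ z : HC, z * (c : HC) = (c : HC) * z := fun z => (Quaternion.coe_commutes c z).symm
  have hl : ∀ z : HC, z * (l : HC) = (l : HC) * z := fun z => (Quaternion.coe_commutes l z).symm
  have h : F * β * q = (l : HC) * (F * q) := by
    rw [mul_assoc, hq, ← mul_assoc, hl, mul_assoc]
  rw [add_mul, add_mul, h, ← Quaternion.coe_mul_eq_smul, ← Quaternion.coe_mul_eq_smul,
    ← Quaternion.coe_mul_eq_smul, ← mul_assoc _ (c : HC), hc, mul_assoc (c : HC), ← mul_add,
    Quaternion.coe_add, add_mul, mul_assoc (n : HC), add_assoc]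

lemma sum_key (lam : ℂ) (h : lam ≠ 0) (β z : HC) :
    z = ((2 * lam)⁻¹ : ℂ) • (z * ((lam : HC) + β)) + ((2 * lam)⁻¹ : ℂ) • (z * ((lam : HC) - β)) := by
  rw [← Quaternion.coe_mul_eq_smul, ← Quaternion.coe_mul_eq_smul, ← mul_add, ← mul_add,
    add_add_sub_cancel, ← Quaternion.coe_add, ← Quaternion.coe_commutes, ← mul_assoc,
    ← Quaternion.coe_mul, ← two_mul, inv_mul_cancel₀ (by simpa using h), Quaternion.coe_one, one_mul]

/-- the splitting (Ps) of the paper,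
`D + νI + M^β = S⁺(D + (ν+λ)I) + S⁻(D + (ν−λ)I)`:
`f` solves `Df + νf + fβ = 0` iff `f⁺ = S⁺f` solves `Df⁺ + (ν+λ)f⁺ = 0` and
`f⁻ = S⁻f` solves `Df⁻ + (ν−λ)f⁻ = 0`; moreover `f = f⁺ + f⁻`. -/
theorem dirac_pseudoscalar_two_fold_splitting
    (Ω : Set (Fin 3 → ℝ)) (hΩ : IsOpen Ω)
    (ν : (Fin 3 → ℝ) → ℂ) (hν : ContinuousOn ν Ω)
    (β : HC) (hβvec : β.re = 0) (hβ : β * β ≠ 0)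
    (lam : ℂ) (hlam0 : lam ≠ 0) (hlam : ((lam ^ 2 : ℂ) : HC) = β * β)
    (f : (Fin 3 → ℝ) → HC) (hf : QDiffOn f Ω) :
    ((∀ x ∈ Ω, Dq f x + (ν x : HC) * f x + f x * β = 0) ↔
      ((∀ x ∈ Ω, Dq (Sp lam β f) x + ((ν x + lam : ℂ) : HC) * Sp lam β f x = 0) ∧
       (∀ x ∈ Ω, Dq (Sm lam β f) x + ((ν x - lam : ℂ) : HC) * Sm lam β f x = 0))) ∧
    (∀ x, f x = Sp lam β f x + Sm lam β f x) := by
  have hs : ∀ x, f x = Sp lam β f x + Sm lam β f x := fun x => sum_key lam hlam0 β (f x)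
  have hP : ∀ x ∈ Ω, Dq (Sp lam β f) x + ((ν x + lam : ℂ) : HC) * Sp lam β f x =
      ((2 * lam)⁻¹ : ℂ) • ((Dq f x + (ν x : HC) * f x + f x * β) * ((lam : HC) + β)) := by
    intro x hx
    unfold Sp
    rw [Dq_mul Ω hΩ f hf x hx]
    refine alg_key _ _ _ _ _ _ _ ?_
    rw [mul_add, mul_add, ← hlam, sq, Quaternion.coe_mul, Quaternion.coe_commutes lam β, add_comm]
  have hM : ∀ x ∈ Ω, Dq (Sm lam β f) x + ((ν x - lam : ℂ) : HC) * Sm lam β f x =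
      ((2 * lam)⁻¹ : ℂ) • ((Dq f x + (ν x : HC) * f x + f x * β) * ((lam : HC) - β)) := by
    intro x hx
    unfold Sm
    rw [Dq_mul Ω hΩ f hf x hx]
    rw [sub_eq_add_neg (ν x) lam]
    refine alg_key _ _ _ _ _ _ _ ?_
    rw [mul_sub, mul_sub, ← hlam, sq, Quaternion.coe_neg, ← Quaternion.coe_commutes,
      Quaternion.coe_mul, neg_mul, neg_mul]
    abel
  refine ⟨⟨fun h => ⟨fun x hx => ?_, fun x hx => ?_⟩, fun h x hx => ?_⟩, hs⟩
  · rw [hP x hx, h x hx, zero_mul, smul_zero]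
  · rw [hM x hx, h x hx, zero_mul, smul_zero]
  · rw [sum_key lam hlam0 β (Dq f x + (ν x : HC) * f x + f x * β), ← hP x hx, ← hM x hx,
      h.1 x hx, h.2 x hx, add_zero]
end
end

section
/- Let Ω ⊆ ℝ³ be open and μ : Ω → ℂ continuous. Define P₁^± f := ½ f(1 ± ie₁). Then a differentiable function f : Ω → ℍ(ℂ) satisfies Df + μf = 0 on Ω if and only if f⁺ := P₁⁺f satisfies Df⁺ + f⁺·(μ ie₁) = 0 on Ω and f⁻ := P₁⁻f satisfies Df⁻ − f⁻·(μ ie₁) = 0 on Ω; moreover f = f⁺ + f⁻. -/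
noncomputable section

/-- Right multiplication projections `P₁^± f = ½ f (1 ± i e₁)`. -/
def P1p (f : (Fin 3 → ℝ) → HC) : (Fin 3 → ℝ) → HC :=
  fun x => (2⁻¹ : ℂ) • (f x * (1 + (Complex.I : HC) * e1))

def P1m (f : (Fin 3 → ℝ) → HC) : (Fin 3 → ℝ) → HC :=
  fun x => (2⁻¹ : ℂ) • (f x * (1 - (Complex.I : HC) * e1))

theorem pd_comb (k : Fin 3) (g h : (Fin 3 → ℝ) → ℂ) (x : Fin 3 → ℝ) (c : ℂ)
    (hg : DifferentiableAt ℝ g x) (hh : DifferentiableAt ℝ h x) :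
    pd k (fun y => 2⁻¹ * (g y + c * h y)) x = 2⁻¹ * (pd k g x + c * pd k h x) := by
  have H := ((hg.hasFDerivAt.add (hh.hasFDerivAt.const_mul c)).const_mul (2⁻¹ : ℂ)).fderiv
  have H2 := congrArg (fun L => L (Pi.single k (1 : ℝ))) H
  simpa [pd, mul_add] using H2

set_option linter.unusedSimpArgs false

/-- Common form of the two projections (`s = I` or `s = -I`). -/
def Pc (s : ℂ) (q : HC) : HC :=
  ⟨2⁻¹ * (q.re + (-s) * q.imI), 2⁻¹ * (q.imI + s * q.re),
   2⁻¹ * (q.imJ + s * q.imK), 2⁻¹ * (q.imK + (-s) * q.imJ)⟩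

theorem e1_re : e1.re = 0 := rfl
theorem e1_imI : e1.imI = 1 := rfl
theorem e1_imJ : e1.imJ = 0 := rfl
theorem e1_imK : e1.imK = 0 := rfl
theorem e2_re : e2.re = 0 := rfl
theorem e2_imI : e2.imI = 0 := rfl
theorem e2_imJ : e2.imJ = 1 := rfl
theorem e2_imK : e2.imK = 0 := rfl
theorem e3_re : e3.re = 0 := rfl
theorem e3_imI : e3.imI = 0 := rfl
theorem e3_imJ : e3.imJ = 0 := rfl
theorem e3_imK : e3.imK = 1 := rfl
theorem one_re : (1 : HC).re = 1 := rfl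
theorem one_imI : (1 : HC).imI = 0 := rfl
theorem one_imJ : (1 : HC).imJ = 0 := rfl
theorem one_imK : (1 : HC).imK = 0 := rfl
theorem Pc_re (s : ℂ) (q : HC) : (Pc s q).re = 2⁻¹ * (q.re + (-s) * q.imI) := rfl
theorem Pc_imI (s : ℂ) (q : HC) : (Pc s q).imI = 2⁻¹ * (q.imI + s * q.re) := rfl
theorem Pc_imJ (s : ℂ) (q : HC) : (Pc s q).imJ = 2⁻¹ * (q.imJ + s * q.imK) := rfl
theorem Pc_imK (s : ℂ) (q : HC) : (Pc s q).imK = 2⁻¹ * (q.imK + (-s) * q.imJ) := rfl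

theorem P1p_eq (f : (Fin 3 → ℝ) → HC) : P1p f = fun x => Pc Complex.I (f x) := by
  funext x
  ext1 <;> simp [P1p, Pc_re, Pc_imI, Pc_imJ, Pc_imK, e1_re, e1_imI, e1_imJ, e1_imK, one_re,
    one_imI, one_imJ, one_imK] <;> ring

theorem P1m_eq (f : (Fin 3 → ℝ) → HC) : P1m f = fun x => Pc (-Complex.I) (f x) := by
  funext x
  ext1 <;> simp [P1m, Pc_re, Pc_imI, Pc_imJ, Pc_imK, e1_re, e1_imI, e1_imJ, e1_imK, one_re,
    one_imI, one_imJ, one_imK] <;> ring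

theorem pdq_Pc (k : Fin 3) (s : ℂ) (f : (Fin 3 → ℝ) → HC) (x : Fin 3 → ℝ)
    (h0 : DifferentiableAt ℝ (fun y => (f y).re) x)
    (h1 : DifferentiableAt ℝ (fun y => (f y).imI) x)
    (h2 : DifferentiableAt ℝ (fun y => (f y).imJ) x)
    (h3 : DifferentiableAt ℝ (fun y => (f y).imK) x) :
    pdq k (fun y => Pc s (f y)) x = Pc s (pdq k f x) := by
  unfold pdq Pc
  ext1
  · exact pd_comb k _ _ x (-s) h0 h1
  · exact pd_comb k _ _ x s h1 h0
  · exact pd_comb k _ _ x s h2 h3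
  · exact pd_comb k _ _ x (-s) h3 h2

theorem Dq_Pc (s : ℂ) (f : (Fin 3 → ℝ) → HC) (x : Fin 3 → ℝ)
    (h0 : DifferentiableAt ℝ (fun y => (f y).re) x)
    (h1 : DifferentiableAt ℝ (fun y => (f y).imI) x)
    (h2 : DifferentiableAt ℝ (fun y => (f y).imJ) x)
    (h3 : DifferentiableAt ℝ (fun y => (f y).imK) x) :
    Dq (fun y => Pc s (f y)) x = Pc s (Dq f x) := by
  unfold Dq
  simp only [pdq_Pc _ s f x h0 h1 h2 h3]
  generalize pdq 0 f x = a
  generalize pdq 1 f x = b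
  generalize pdq 2 f x = c
  ext1 <;> simp [Pc_re, Pc_imI, Pc_imJ, Pc_imK, e1_re, e1_imI, e1_imJ, e1_imK, e2_re, e2_imI,
    e2_imJ, e2_imK, e3_re, e3_imI, e3_imJ, e3_imK, one_re, one_imI, one_imJ,
    one_imK] <;> ring

theorem Pc_plus (m : ℂ) (d q : HC) :
    Pc Complex.I d + Pc Complex.I q * ((m : HC) * ((Complex.I : HC) * e1)) =
      Pc Complex.I (d + (m : HC) * q) := by
  have hI := Complex.I_mul_I
  ext1 <;> simp [Pc_re, Pc_imI, Pc_imJ, Pc_imK, e1_re, e1_imI, e1_imJ, e1_imK, one_re,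
    one_imI, one_imJ, one_imK] <;> grind

theorem Pc_minus (m : ℂ) (d q : HC) :
    Pc (-Complex.I) d - Pc (-Complex.I) q * ((m : HC) * ((Complex.I : HC) * e1)) =
      Pc (-Complex.I) (d + (m : HC) * q) := by
  have hI := Complex.I_mul_I
  ext1 <;> simp [Pc_re, Pc_imI, Pc_imJ, Pc_imK, e1_re, e1_imI, e1_imJ, e1_imK, one_re,
    one_imI, one_imJ, one_imK] <;> grind

theorem zero_re : (0 : HC).re = 0 := rfl
theorem zero_imI : (0 : HC).imI = 0 := rfl
theorem zero_imJ : (0 : HC).imJ = 0 := rfl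
theorem zero_imK : (0 : HC).imK = 0 := rfl

theorem Pc_zero (s : ℂ) : Pc s 0 = 0 := by
  ext1 <;> simp [Pc_re, Pc_imI, Pc_imJ, Pc_imK, zero_re, zero_imI, zero_imJ, zero_imK]

theorem Pc_sum (q : HC) : q = Pc Complex.I q + Pc (-Complex.I) q := by
  ext1 <;> simp [Pc_re, Pc_imI, Pc_imJ, Pc_imK, one_re, one_imI, one_imJ, one_imK] <;> ring

/-- the splitting (Ps±) of the paper,
`D + μI = P₁⁺(D + M^{μie₁}) + P₁⁻(D − M^{μie₁})`:
`f` solves `Df + μf = 0` iff `f⁺ = P₁⁺f` solves `Df⁺ + f⁺·(μ i e₁) = 0` and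
`f⁻ = P₁⁻f` solves `Df⁻ − f⁻·(μ i e₁) = 0`; moreover `f = f⁺ + f⁻`. -/
theorem scalar_plus_D_splitting
    (Ω : Set (Fin 3 → ℝ)) (hΩ : IsOpen Ω)
    (μ : (Fin 3 → ℝ) → ℂ) (hμ : ContinuousOn μ Ω)
    (f : (Fin 3 → ℝ) → HC) (hf : QDiffOn f Ω) :
    ((∀ x ∈ Ω, Dq f x + (μ x : HC) * f x = 0) ↔
      ((∀ x ∈ Ω, Dq (P1p f) x + P1p f x * ((μ x : HC) * ((Complex.I : HC) * e1)) = 0) ∧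
       (∀ x ∈ Ω, Dq (P1m f) x - P1m f x * ((μ x : HC) * ((Complex.I : HC) * e1)) = 0))) ∧
    (∀ x, f x = P1p f x + P1m f x) := by
  have key : ∀ x ∈ Ω, ∀ s : ℂ, Dq (fun y => Pc s (f y)) x = Pc s (Dq f x) := by
    intro x hx s
    obtain ⟨h0, h1, h2, h3⟩ := hf
    have hn := hΩ.mem_nhds hx
    exact Dq_Pc s f x (h0.differentiableAt hn) (h1.differentiableAt hn)
      (h2.differentiableAt hn) (h3.differentiableAt hn)
  rw [P1p_eq, P1m_eq]
  refine ⟨⟨fun h => ⟨fun x hx => ?_, fun x hx => ?_⟩, fun h x hx => ?_⟩, fun x => Pc_sum _⟩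
  · rw [key x hx, Pc_plus, h x hx, Pc_zero]
  · rw [key x hx, Pc_minus, h x hx, Pc_zero]
  · have hp := h.1 x hx
    have hm := h.2 x hx
    rw [key x hx, Pc_plus] at hp
    rw [key x hx, Pc_minus] at hm
    rw [Pc_sum (Dq f x + (μ x : HC) * f x), hp, hm, add_zero]
end
end

section
/- Let Ω ⊆ ℝ³ be open, ω, m ∈ ℝ, and φ_el : Ω → ℝ continuous. Let Ω̃ := {x ∈ ℝ³ : (x₁,x₂,−x₃) ∈ Ω}. For a differentiable Φ : Ω → ℂ⁴ define F : Ω̃ → ℍ(ℂ) by F = F₀ + F₁e₁ + F₂e₂ + F₃e₃ with F₀(x) = −½(Φ̃₁(x) − Φ̃₂(x)), F₁(x) = (i/2)(Φ̃₀(x) − Φ̃₃(x)), F₂(x) = −½(Φ̃₀(x) + Φ̃₃(x)), F₃(x) = (i/2)(Φ̃₁(x) + Φ̃₂(x)), where Φ̃(x) := Φ(x₁,x₂,−x₃). Then Φ satisfies the Dirac equation with electric potential, i(ω + φ_el)γ₀Φ + γ₁∂₁Φ + γ₂∂₂Φ + γ₃∂₃Φ + imΦ = 0 on Ω, if and only if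 F satisfies DF + F·α_el = 0 on Ω̃, where α_el(x) = −(i(ω + φ_el(x₁,x₂,−x₃)) e₁ + m e₂). -/
noncomputable section

open Matrix in
/-- The γ-matrices in the standard Dirac representation. -/
def γ0 : Matrix (Fin 4) (Fin 4) ℂ := !![1,0,0,0; 0,1,0,0; 0,0,-1,0; 0,0,0,-1]
open Matrix in
def γ1 : Matrix (Fin 4) (Fin 4) ℂ := !![0,0,0,1; 0,0,1,0; 0,-1,0,0; -1,0,0,0]
open Matrix in
def γ2 : Matrix (Fin 4) (Fin 4) ℂ :=
  !![0,0,0,-Complex.I; 0,0,Complex.I,0; 0,Complex.I,0,0; -Complex.I,0,0,0]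
open Matrix in
def γ3 : Matrix (Fin 4) (Fin 4) ℂ := !![0,0,1,0; 0,0,0,-1; -1,0,0,0; 0,1,0,0]

/-- Componentwise partial derivative of a `ℂ⁴`-valued function. -/
def pdv (k : Fin 3) (Φ : (Fin 3 → ℝ) → (Fin 4 → ℂ)) (x : Fin 3 → ℝ) : Fin 4 → ℂ :=
  fun j => pd k (fun y => Φ y j) x

/-- The reflection `x ↦ (x₁, x₂, −x₃)`. -/
def refl3 (x : Fin 3 → ℝ) : Fin 3 → ℝ := ![x 0, x 1, -x 2]

/-- The transform `F = 𝒜[Φ]` of the paper (with `Φ̃(x) = Φ(x₁,x₂,−x₃)`). -/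
def AF (Φ : (Fin 3 → ℝ) → (Fin 4 → ℂ)) (x : Fin 3 → ℝ) : HC :=
  ⟨-(Φ (refl3 x) 1 - Φ (refl3 x) 2) / 2,
   Complex.I * (Φ (refl3 x) 0 - Φ (refl3 x) 3) / 2,
   -(Φ (refl3 x) 0 + Φ (refl3 x) 3) / 2,
   Complex.I * (Φ (refl3 x) 1 + Φ (refl3 x) 2) / 2⟩

theorem refl3_invol (x : Fin 3 → ℝ) : refl3 (refl3 x) = x := by
  ext i; fin_cases i <;> simp [refl3]

/-- The reflection as a continuous linear map. -/
def reflL : (Fin 3 → ℝ) →L[ℝ] (Fin 3 → ℝ) :=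
  ContinuousLinearMap.pi ![ContinuousLinearMap.proj 0, ContinuousLinearMap.proj 1,
    -ContinuousLinearMap.proj 2]

theorem reflL_apply (x : Fin 3 → ℝ) : reflL x = refl3 x := by
  ext i; fin_cases i <;> simp [reflL, refl3]

theorem hasFDerivAt_comp_refl3 {g : (Fin 3 → ℝ) → ℂ} {x : Fin 3 → ℝ}
    (hg : DifferentiableAt ℝ g (refl3 x)) :
    HasFDerivAt (fun y => g (refl3 y)) ((fderiv ℝ g (refl3 x)).comp reflL) x := by
  have h1 : HasFDerivAt (fun y => refl3 y) reflL x := by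
    have := reflL.hasFDerivAt (x := x)
    rwa [show (reflL : (Fin 3 → ℝ) → (Fin 3 → ℝ)) = fun y => refl3 y from
      funext reflL_apply] at this
  exact HasFDerivAt.comp x hg.hasFDerivAt h1

/-- sign of the reflected derivative -/
def sgn3 (k : Fin 3) : ℝ := ![1, 1, -1] k

theorem reflL_single (k : Fin 3) :
    reflL (Pi.single k 1) = sgn3 k • (Pi.single k 1 : Fin 3 → ℝ) := by
  rw [reflL_apply]
  ext i; fin_cases k <;> fin_cases i <;> simp [refl3, sgn3]

theorem pd_lin_s4 {g h : (Fin 3 → ℝ) → ℂ} {x : Fin 3 → ℝ} (k : Fin 3) (a b : ℂ)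
    (hg : DifferentiableAt ℝ g (refl3 x)) (hh : DifferentiableAt ℝ h (refl3 x)) :
    pd k (fun y => a * g (refl3 y) + b * h (refl3 y)) x =
      (sgn3 k : ℂ) * (a * pd k g (refl3 x) + b * pd k h (refl3 x)) := by
  have := (((hasFDerivAt_comp_refl3 hg).const_mul a).add
    ((hasFDerivAt_comp_refl3 hh).const_mul b)).fderiv
  unfold pd
  refine (congrArg (fun L => L (Pi.single k 1)) this).trans ?_
  simp [reflL_single]
  ring

theorem pdq_AF (Φ : (Fin 3 → ℝ) → (Fin 4 → ℂ)) (x : Fin 3 → ℝ) (k : Fin 3)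
    (h : ∀ j : Fin 4, DifferentiableAt ℝ (fun y => Φ y j) (refl3 x)) :
    pdq k (AF Φ) x = ⟨sgn3 k * (-(pdv k Φ (refl3 x) 1 - pdv k Φ (refl3 x) 2) / 2),
      sgn3 k * (Complex.I * (pdv k Φ (refl3 x) 0 - pdv k Φ (refl3 x) 3) / 2),
      sgn3 k * (-(pdv k Φ (refl3 x) 0 + pdv k Φ (refl3 x) 3) / 2),
      sgn3 k * (Complex.I * (pdv k Φ (refl3 x) 1 + pdv k Φ (refl3 x) 2) / 2)⟩ := by
  have e0 := pd_lin_s4 k (-1/2) (1/2) (h 1) (h 2)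
  have e1 := pd_lin_s4 k (Complex.I/2) (-Complex.I/2) (h 0) (h 3)
  have e2 := pd_lin_s4 k (-1/2) (-1/2) (h 0) (h 3)
  have e3 := pd_lin_s4 k (Complex.I/2) (Complex.I/2) (h 1) (h 2)
  unfold pdq
  ext
  · refine Eq.trans ?_ (e0.trans ?_)
    · refine congrArg (fun f => pd k f x) (funext fun y => ?_); simp only [AF]; ring
    · simp only [pdv]; ring
  · refine Eq.trans ?_ (e1.trans ?_)
    · refine congrArg (fun f => pd k f x) (funext fun y => ?_); simp only [AF]; ring
    · simp only [pdv]; ring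
  · refine Eq.trans ?_ (e2.trans ?_)
    · refine congrArg (fun f => pd k f x) (funext fun y => ?_); simp only [AF]; ring
    · simp only [pdv]; ring
  · refine Eq.trans ?_ (e3.trans ?_)
    · refine congrArg (fun f => pd k f x) (funext fun y => ?_); simp only [AF]; ring
    · simp only [pdv]; ring

theorem quat_expand (a m : ℂ) (P Q R U : HC) :
    e1 * P + e2 * Q + e3 * R + U * (-(a • e1 + m • e2)) = 0 ↔
      (-P.imI - Q.imJ - R.imK + a * U.imI + m * U.imJ = 0 ∧
       P.re + Q.imK - R.imJ - a * U.re + m * U.imK = 0 ∧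
       Q.re + R.imI - P.imK - m * U.re - a * U.imK = 0 ∧
       R.re + P.imJ - Q.imI - m * U.imI + a * U.imJ = 0) := by
  have a0 : e1.re = 0 := rfl
  have a1 : e1.imI = 1 := rfl
  have a2 : e1.imJ = 0 := rfl
  have a3 : e1.imK = 0 := rfl
  have b0 : e2.re = 0 := rfl
  have b1 : e2.imI = 0 := rfl
  have b2 : e2.imJ = 1 := rfl
  have b3 : e2.imK = 0 := rfl
  have c0 : e3.re = 0 := rfl
  have c1 : e3.imI = 0 := rfl
  have c2 : e3.imJ = 0 := rfl
  have c3 : e3.imK = 1 := rfl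
  rw [Quaternion.ext_iff]
  refine and_congr ?_ (and_congr ?_ (and_congr ?_ ?_)) <;>
  · simp only [Quaternion.re_add, Quaternion.imI_add, Quaternion.imJ_add, Quaternion.imK_add,
      Quaternion.re_mul, Quaternion.imI_mul, Quaternion.imJ_mul, Quaternion.imK_mul,
      Quaternion.re_neg, Quaternion.imI_neg, Quaternion.imJ_neg, Quaternion.imK_neg,
      Quaternion.re_smul, Quaternion.imI_smul, Quaternion.imJ_smul, Quaternion.imK_smul,
      Quaternion.re_zero, Quaternion.imI_zero, Quaternion.imJ_zero, Quaternion.imK_zero,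
      a0, a1, a2, a3, b0, b1, b2, b3, c0, c1, c2, c3, smul_eq_mul]
    ring_nf

theorem dirac_pointwise (ω m φ : ℂ) (Φ : (Fin 3 → ℝ) → (Fin 4 → ℂ)) (x : Fin 3 → ℝ)
    (h : ∀ j : Fin 4, DifferentiableAt ℝ (fun y => Φ y j) (refl3 x)) :
    ((Complex.I * (ω + φ)) • γ0.mulVec (Φ (refl3 x)) + γ1.mulVec (pdv 0 Φ (refl3 x)) +
          γ2.mulVec (pdv 1 Φ (refl3 x)) + γ3.mulVec (pdv 2 Φ (refl3 x)) +
          (Complex.I * m) • Φ (refl3 x) = 0) ↔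
      Dq (AF Φ) x + AF Φ x * (-((Complex.I * (ω + φ)) • e1 + m • e2)) = 0 := by
  have hI : Complex.I * Complex.I = -1 := Complex.I_mul_I
  unfold Dq
  rw [quat_expand, pdq_AF Φ x 0 h, pdq_AF Φ x 1 h, pdq_AF Φ x 2 h, funext_iff]
  simp only [Fin.forall_fin_succ, AF]
  generalize pdv 0 Φ (refl3 x) = p
  generalize pdv 1 Φ (refl3 x) = q
  generalize pdv 2 Φ (refl3 x) = r
  generalize Φ (refl3 x) = u
  simp [γ0, γ1, γ2, γ3, sgn3, dotProduct, Fin.sum_univ_four]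
  constructor
  · rintro ⟨r0, r1, r2, r3⟩
    refine ⟨?_, ?_, ?_, ?_⟩
    · linear_combination (Complex.I / 2) * (r0 + r3) + ((q 3 + q 0 - u 0 * m - u 3 * m) / 2) * hI
    · linear_combination (1 / 2) * (r1 + r2)
    · linear_combination (-Complex.I / 2) * (r1 - r2) + ((q 2 - q 1 - m * u 2 + m * u 1) / 2) * hI
    · linear_combination (-1 / 2) * (r0 - r3)
  · rintro ⟨s0, s1, s2, s3⟩
    refine ⟨?_, ?_, ?_, ?_⟩
    · linear_combination (-Complex.I) * s0 - s3 + ((Complex.I * (ω + φ) * (u 0 - u 3) + p 3 + r 2 + r 1 - p 0) / 2) * hI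
    · linear_combination s1 + Complex.I * s2 + ((Complex.I * (ω + φ) * (u 1 + u 2) + p 2 - r 3 + p 1 + r 0) / 2) * hI
    · linear_combination s1 - Complex.I * s2 - ((Complex.I * (ω + φ) * (u 1 + u 2) + p 2 - r 3 + p 1 + r 0) / 2) * hI
    · linear_combination (-Complex.I) * s0 + s3 + ((Complex.I * (ω + φ) * (u 0 - u 3) + p 3 + r 2 + r 1 - p 0) / 2) * hI

/-- the Dirac equation with electric potential
`i(ω + φ_el)γ₀Φ + Σ γ_k ∂_kΦ + imΦ = 0` on `Ω` is equivalent, under the transform `F = 𝒜[Φ]`,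
to `DF + F·α_el = 0` on `Ω̃`, with `α_el = −(i(ω + φ̃_el) e₁ + m e₂)`. -/
theorem dirac_electric_potential_equiv
    (Ω : Set (Fin 3 → ℝ)) (hΩ : IsOpen Ω) (ω m : ℝ)
    (φel : (Fin 3 → ℝ) → ℝ) (hφ : ContinuousOn φel Ω)
    (Φ : (Fin 3 → ℝ) → (Fin 4 → ℂ))
    (hΦ : ∀ j : Fin 4, DifferentiableOn ℝ (fun y => Φ y j) Ω) :
    (∀ x ∈ Ω,
        (Complex.I * ((ω : ℂ) + (φel x : ℂ))) • γ0.mulVec (Φ x) + γ1.mulVec (pdv 0 Φ x) +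
          γ2.mulVec (pdv 1 Φ x) + γ3.mulVec (pdv 2 Φ x) +
          (Complex.I * (m : ℂ)) • Φ x = 0) ↔
    (∀ x, refl3 x ∈ Ω →
        Dq (AF Φ) x + AF Φ x *
          (-((Complex.I * ((ω : ℂ) + (φel (refl3 x) : ℂ))) • e1 + (m : ℂ) • e2)) = 0) := by
  have key : ∀ x, refl3 x ∈ Ω → _ := fun x hx =>
    dirac_pointwise (ω : ℂ) (m : ℂ) (φel (refl3 x) : ℂ) Φ x
      (fun j => (hΦ j).differentiableAt (hΩ.mem_nhds hx))
  constructor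
  · intro H x hx
    exact (key x hx).1 (H _ hx)
  · intro H x hx
    have hx' : refl3 (refl3 x) ∈ Ω := by rwa [refl3_invol]
    have := (key (refl3 x) hx').2 (H _ hx')
    rwa [refl3_invol] at this
end
end

section
/- Let Ω ⊆ ℝ³ be open, let α : Ω → ℍ(ℂ) be a differentiable purely vectorial function and v : Ω → ℂ a function such that Dα + α² = −v on Ω (the quaternionic Riccati equation; here v is identified with v·e₀). Then for every twice differentiable scalar function φ : Ω → ℂ, the factorization (D + M^α)(D − M^α)φ = (−Δ + v)φ holds on Ω, i.e. D(Dφ − φα) + (Dφ − φα)·α = −Δφ + vφ. -/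
noncomputable section

/-- Build a biquaternion from its four complex components. -/
def quat (a b c d : ℂ) : HC := ⟨a, b, c, d⟩

@[simp] theorem quat_re (a b c d : ℂ) : (quat a b c d).re = a := rfl
@[simp] theorem quat_imI (a b c d : ℂ) : (quat a b c d).imI = b := rfl
@[simp] theorem quat_imJ (a b c d : ℂ) : (quat a b c d).imJ = c := rfl
@[simp] theorem quat_imK (a b c d : ℂ) : (quat a b c d).imK = d := rfl

theorem e1_eq : e1 = quat 0 1 0 0 := rfl
theorem e2_eq : e2 = quat 0 0 1 0 := rfl
theorem e3_eq : e3 = quat 0 0 0 1 := rfl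
theorem pdq_eq (k : Fin 3) (f : (Fin 3 → ℝ) → HC) (x : Fin 3 → ℝ) : pdq k f x =
    quat (pd k (fun y => (f y).re) x) (pd k (fun y => (f y).imI) x)
      (pd k (fun y => (f y).imJ) x) (pd k (fun y => (f y).imK) x) := rfl

theorem Dq_eq (f : (Fin 3 → ℝ) → HC) (x : Fin 3 → ℝ) : Dq f x =
    quat (-(pd 0 (fun y => (f y).imI) x + pd 1 (fun y => (f y).imJ) x + pd 2 (fun y => (f y).imK) x))
     (pd 0 (fun y => (f y).re) x + pd 1 (fun y => (f y).imK) x - pd 2 (fun y => (f y).imJ) x)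
     (pd 1 (fun y => (f y).re) x - pd 0 (fun y => (f y).imK) x + pd 2 (fun y => (f y).imI) x)
     (pd 2 (fun y => (f y).re) x + pd 0 (fun y => (f y).imJ) x - pd 1 (fun y => (f y).imI) x) := by
  ext <;> simp [Dq, e1_eq, e2_eq, e3_eq, pdq_eq] <;> ring

theorem pd_zero (k : Fin 3) (x : Fin 3 → ℝ) : pd k (fun _ => (0 : ℂ)) x = 0 := by
  simp [pd]

theorem Dq_coe (φ : (Fin 3 → ℝ) → ℂ) (x : Fin 3 → ℝ) : Dq (fun z => ((φ z : ℂ) : HC)) x =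
    quat 0 (pd 0 φ x) (pd 1 φ x) (pd 2 φ x) := by
  rw [Dq_eq]
  ext <;> simp [pd_zero]

theorem pd_sub_mul (k : Fin 3) (g p a : (Fin 3 → ℝ) → ℂ) (x : Fin 3 → ℝ)
    (hg : DifferentiableAt ℝ g x) (hp : DifferentiableAt ℝ p x) (ha : DifferentiableAt ℝ a x) :
    pd k (fun y => g y - p y * a y) x = pd k g x - (pd k p x * a x + p x * pd k a x) := by
  unfold pd
  rw [(hg.hasFDerivAt.fun_sub (hp.hasFDerivAt.fun_mul ha.hasFDerivAt)).fderiv]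
  simp
  ring

theorem pd_neg_mul (k : Fin 3) (p a : (Fin 3 → ℝ) → ℂ) (x : Fin 3 → ℝ)
    (hp : DifferentiableAt ℝ p x) (ha : DifferentiableAt ℝ a x) :
    pd k (fun y => -(p y * a y)) x = - (pd k p x * a x + p x * pd k a x) := by
  have := pd_sub_mul k (fun _ => 0) p a x (by fun_prop) hp ha
  simpa [pd_zero] using this

theorem pd_diff (φ : (Fin 3 → ℝ) → ℂ) (x : Fin 3 → ℝ) (h : ContDiffAt ℝ 2 φ x) (k : Fin 3) :
    DifferentiableAt ℝ (pd k φ) x := by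
  have h1 : DifferentiableAt ℝ (fderiv ℝ φ) x :=
    (h.fderiv_right (m := 1) (by norm_num)).differentiableAt (by norm_num)
  unfold pd
  fun_prop

theorem pd_comm (φ : (Fin 3 → ℝ) → ℂ) (x : Fin 3 → ℝ) (h : ContDiffAt ℝ 2 φ x) (j k : Fin 3) :
    pd j (pd k φ) x = pd k (pd j φ) x := by
  have h1 : DifferentiableAt ℝ (fderiv ℝ φ) x :=
    (h.fderiv_right (m := 1) (by norm_num)).differentiableAt (by norm_num)
  have key : ∀ j k : Fin 3, pd j (pd k φ) x =
      fderiv ℝ (fderiv ℝ φ) x (Pi.single j 1) (Pi.single k 1) := by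
    intro j k
    have := (h1.hasFDerivAt.clm_apply (hasFDerivAt_const (Pi.single k (1:ℝ)) x)).fderiv
    change fderiv ℝ (fun y => fderiv ℝ φ y (Pi.single k 1)) x (Pi.single j 1) = _
    rw [this]
    simp
  rw [key, key]
  exact (h.isSymmSndFDerivAt (by simp)) _ _

/-- the quaternionic factorization (scfact) of the Schrödinger operator:
if `Dα + α² = −v` (quaternionic Riccati equation) with `α` purely vectorial, then for every
twice differentiable scalar `φ`: `(D + M^α)(D − M^α)φ = −Δφ + vφ`. -/
theorem schroedinger_factorization
    (Ω : Set (Fin 3 → ℝ)) (hΩ : IsOpen Ω)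
    (α : (Fin 3 → ℝ) → HC) (hα : QDiffOn α Ω)
    (hαvec : ∀ x ∈ Ω, (α x).re = 0)
    (v : (Fin 3 → ℝ) → ℂ)
    (hRiccati : ∀ x ∈ Ω, Dq α x + α x * α x = -((v x : ℂ) : HC))
    (φ : (Fin 3 → ℝ) → ℂ) (hφ : ContDiffOn ℝ 2 φ Ω) :
    ∀ x ∈ Ω,
      Dq (fun y => Dq (fun z => ((φ z : ℂ) : HC)) y - ((φ y : ℂ) : HC) * α y) x +
        (Dq (fun z => ((φ z : ℂ) : HC)) x - ((φ x : ℂ) : HC) * α x) * α x =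
      -((lap φ x : ℂ) : HC) + ((v x : ℂ) : HC) * ((φ x : ℂ) : HC) := by
  intro x hx
  have hn := hΩ.mem_nhds hx
  have hφ' : ContDiffAt ℝ 2 φ x := hφ.contDiffAt hn
  have hp : DifferentiableAt ℝ φ x := hφ'.differentiableAt (by norm_num)
  have d := pd_diff φ x hφ'
  obtain ⟨a0, a1, a2, a3⟩ := hα
  replace a0 := a0.differentiableAt hn
  replace a1 := a1.differentiableAt hn
  replace a2 := a2.differentiableAt hn
  replace a3 := a3.differentiableAt hn
  have c01 := pd_comm φ x hφ' 0 1
  have c02 := pd_comm φ x hφ' 0 2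
  have c12 := pd_comm φ x hφ' 1 2
  have hR := hRiccati x hx
  rw [Dq_eq] at hR
  have r0 := congrArg QuaternionAlgebra.re hR
  have r1 := congrArg QuaternionAlgebra.imI hR
  have r2 := congrArg QuaternionAlgebra.imJ hR
  have r3 := congrArg QuaternionAlgebra.imK hR
  clear hR
  simp only [Dq_coe]
  rw [Dq_eq]
  simp at r0 r1 r2 r3
  ext <;> simp [pd_sub_mul, pd_neg_mul, hp, d, a0, a1, a2, a3, lap]
  · linear_combination φ x * (-r0)
  · linear_combination φ x * (-r1) + c12
  · linear_combination φ x * (-r2) - c02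
  · linear_combination φ x * (-r3) + c01
end
end
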